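/- For every set Γ of infinite binary sequences, the packing dimension of Γ equals the infimum of the set of all s ∈ [0,∞) for which there exists a learning function l that strongly s-learns every X ∈ Γ; that is, dim_P(Γ) = inf{s ∈ [0,∞) : some learning function strongly s-learns every X ∈ Γ}. -/

import Mathlib

/-!
Both infima range over sets of exponents that agree up to an arbitrarily small loss.

*Gale to learner* (`learns_of_gale`, no loss).  An `s`-gale `d`, rescaled to
`D w = 2^((1-s)|w|) d w / (1 + d [])`, is a martingale with `D [] ≤ 1`.  The learner says yes at
`w` exactly when `D w ≥ 2^(k+1)`, where `k` is the number of earlier yeses.  A martingale at most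
doubles in one step, so the yes count `k` always satisfies `D w < 2^(k+1)`
(`lt_two_pow_greedyCount`); if `d` tends to infinity along `X`, this forces
`k + 1 > (1-s) n` eventually.  Conversely `n` yeses require `D ≥ 2^n` at some prefix, and the
measure condition is the maximal inequality for `D` (`greedy_measure_le`).

*Learner to gale* (`gale_of_learns`).  Let `U n` be the set of sequences with at least `n` yeses.
Since `μ (U n) ≤ 2^(-n)`, the measure `ν = ∑ n, 2^((1-ε)n) • μ|U n` is finite, so
`w ↦ 2^(t|w|) ν(C_w)` is a `t`-gale.  A string `w` with `k` yeses along it has `C_w ⊆ U k`, so the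
gale is at least `2^((t-1)|w| + (1-ε)k)` there.  As `k ≥ (1-s-ε)|w|` eventually along a learned
sequence, this tends to infinity for every `t > s`, once `ε` is small.
-/

open Filter MeasureTheory

/-- `pref X n` is the string consisting of the first `n` bits of the sequence `X`. -/
def pref (X : ℕ → Bool) (n : ℕ) : List Bool := (List.range n).map X

/-- The cylinder at a finite binary string `w`: all sequences extending `w`. -/
def cylinder (w : List Bool) : Set (ℕ → Bool) := {X | pref X w.length = w}

/-- `l` satisfies the measure condition (w.r.t. the measure `μ`):
for every `n`, the set of sequences along which `l` says yes (`true`)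
at least `n` times has measure at most `2⁻ⁿ`. -/
def MeasureCondition (μ : Measure (ℕ → Bool)) (l : List Bool → Bool) : Prop :=
  ∀ n : ℕ, μ {Y | (n : ℕ∞) ≤ {m : ℕ | l (pref Y m) = true}.encard} ≤ (2 ^ n)⁻¹

/-- The path average of a learning function `l` up to the string `w`. -/
noncomputable def pathAvg (l : List Bool → Bool) (w : List Bool) : ℝ :=
  (∑ i ∈ Finset.range (w.length + 1), if l (w.take i) then (1 : ℝ) else 0) / w.length

/-- `l` strongly `s`-learns `X` (w.r.t. `μ`). -/
def StronglySLearns (μ : Measure (ℕ → Bool)) (l : List Bool → Bool) (s : ℝ) (X : ℕ → Bool) :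
    Prop :=
  MeasureCondition μ l ∧
    1 - s ≤ Filter.liminf (fun n => pathAvg l (pref X n)) Filter.atTop

/-- An `s`-gale (for the uniform measure): a nonnegative function with
`2^s d(w) = d(w0) + d(w1)`. -/
def IsGale (s : ℝ) (d : List Bool → ℝ) : Prop :=
  (∀ w, 0 ≤ d w) ∧ ∀ w, (2 : ℝ) ^ s * d w = d (w ++ [false]) + d (w ++ [true])

/-- `d` succeeds strongly on `X`: `liminf_n d(X↾n) = ∞`. -/
def SucceedsStronglyOn (d : List Bool → ℝ) (X : ℕ → Bool) : Prop :=
  Filter.Tendsto (fun n => d (pref X n)) Filter.atTop Filter.atTop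

/-- The packing dimension of `Γ`: the infimum of all `s ≥ 0` such that some `s`-gale
succeeds strongly on every `X ∈ Γ`. -/
noncomputable def dimP (Γ : Set (ℕ → Bool)) : ℝ :=
  sInf {s : ℝ | 0 ≤ s ∧ ∃ d, IsGale s d ∧ ∀ X ∈ Γ, SucceedsStronglyOn d X}

/-! ### Prefixes and cylinders -/

lemma pref_length (X : ℕ → Bool) (n : ℕ) : (pref X n).length = n := by simp [pref]

lemma pref_succ (X : ℕ → Bool) (n : ℕ) : pref X (n + 1) = pref X n ++ [X n] := by
  simp [pref, List.range_succ]

lemma pref_take (X : ℕ → Bool) {i n : ℕ} (h : i ≤ n) : (pref X n).take i = pref X i := by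
  simp [pref, ← List.map_take, List.take_range, h]

lemma cylinder_nil : cylinder [] = Set.univ := by
  ext X; simp [_root_.cylinder, pref]

lemma mem_cylinder_append (X : ℕ → Bool) (w : List Bool) (b : Bool) :
    X ∈ cylinder (w ++ [b]) ↔ X ∈ cylinder w ∧ X w.length = b := by
  simp only [_root_.cylinder, Set.mem_ofPred_eq, List.length_append, List.length_singleton, pref_succ]
  constructor
  · intro h
    have := List.append_inj' h rfl
    simpa using this
  · rintro ⟨h1, h2⟩
    rw [h1, h2]

lemma measurableSet_cylinder_bool (w : List Bool) : MeasurableSet (cylinder w) := by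
  induction w using List.reverseRecOn with
  | nil => rw [cylinder_nil]; exact MeasurableSet.univ
  | append_singleton w b ih =>
    have : cylinder (w ++ [b]) = cylinder w ∩ (fun X : ℕ → Bool => X w.length) ⁻¹' {b} := by
      ext X; simp [mem_cylinder_append]
    rw [this]
    exact ih.inter ((measurable_pi_apply _) (MeasurableSet.singleton b))

lemma cylinder_split (w : List Bool) :
    cylinder w = cylinder (w ++ [false]) ∪ cylinder (w ++ [true]) := by
  ext X
  simp only [Set.mem_union, mem_cylinder_append]
  cases X w.length <;> simp

lemma cylinder_disjoint (w : List Bool) :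
    Disjoint (cylinder (w ++ [false])) (cylinder (w ++ [true])) := by
  rw [Set.disjoint_left]
  intro X h1 h2
  rw [mem_cylinder_append] at h1 h2
  simp [h1.2] at h2

/-! ### Counting yeses -/

/-- The number of yeses of `l` on the prefixes of `w`, both `[]` and `w` included. -/
def yesCount (l : List Bool → Bool) (w : List Bool) : ℕ :=
  ∑ i ∈ Finset.range (w.length + 1), if l (w.take i) then 1 else 0

lemma pathAvg_eq (l : List Bool → Bool) (w : List Bool) :
    pathAvg l w = (yesCount l w : ℝ) / w.length := by
  simp [pathAvg, yesCount]

lemma yesCount_pref (l : List Bool → Bool) (Y : ℕ → Bool) (N : ℕ) :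
    yesCount l (pref Y N) = ((Finset.range (N + 1)).filter (fun m => l (pref Y m) = true)).card := by
  rw [yesCount, Finset.card_filter, pref_length]
  refine Finset.sum_congr rfl fun i hi => ?_
  rw [pref_take Y (by simpa [Nat.lt_succ_iff] using hi)]

lemma yesCount_append (l : List Bool → Bool) (w : List Bool) (b : Bool) :
    yesCount l (w ++ [b]) = yesCount l w + if l (w ++ [b]) then 1 else 0 := by
  rw [yesCount, List.length_append, List.length_singleton, Finset.sum_range_succ, yesCount]
  congr 1
  · refine Finset.sum_congr rfl fun i hi => ?_
    rw [List.take_append_of_le_length (by simpa [Nat.lt_succ_iff] using hi)]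
  · rw [List.take_of_length_le (by simp)]

lemma pathAvg_nonneg (l : List Bool → Bool) (w : List Bool) : 0 ≤ pathAvg l w := by
  rw [pathAvg_eq]; positivity

lemma pathAvg_le_two (l : List Bool → Bool) (w : List Bool) : pathAvg l w ≤ 2 := by
  rw [pathAvg_eq]
  rcases Nat.eq_zero_or_pos w.length with h | h
  · simp [h]
  · have hc : yesCount l w ≤ w.length + 1 := by
      calc yesCount l w ≤ ∑ i ∈ Finset.range (w.length + 1), 1 :=
            Finset.sum_le_sum fun i _ => by split_ifs <;> simp
        _ = w.length + 1 := by simp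
    have h' : (0 : ℝ) < w.length := by exact_mod_cast h
    rw [div_le_iff₀ h']
    have : yesCount l w ≤ 2 * w.length := by omega
    exact_mod_cast this

/-- `yesSet l n` is the set of sequences along which `l` says yes at least `n` times. -/
def yesSet (l : List Bool → Bool) (n : ℕ) : Set (ℕ → Bool) :=
  {Y | (n : ℕ∞) ≤ {m : ℕ | l (pref Y m) = true}.encard}

lemma mem_yesSet_iff (l : List Bool → Bool) (n : ℕ) (Y : ℕ → Bool) :
    Y ∈ yesSet l n ↔ ∃ N, n ≤ yesCount l (pref Y N) := by
  simp only [yesCount_pref]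
  constructor
  · intro h
    obtain ⟨T, hT, hTn⟩ := Set.exists_subset_encard_eq h
    have hfin : T.Finite := Set.finite_of_encard_eq_coe hTn
    obtain ⟨N, hN⟩ := hfin.bddAbove
    refine ⟨N, ?_⟩
    rw [hfin.encard_eq_coe_toFinset_card, Nat.cast_inj] at hTn
    rw [← hTn]
    refine Finset.card_le_card fun m hm => ?_
    rw [Set.Finite.mem_toFinset] at hm
    simp only [Finset.mem_filter, Finset.mem_range]
    exact ⟨Nat.lt_succ_of_le (hN hm), hT hm⟩
  · rintro ⟨N, hN⟩
    refine le_trans (Nat.cast_le (α := ℕ∞).mpr hN) ?_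
    rw [← Set.encard_coe_eq_coe_finsetCard]
    exact Set.encard_le_encard fun m hm => by simpa using (by simpa using hm : _ ∧ _).2

lemma cylinder_subset_yesSet (l : List Bool → Bool) (w : List Bool) :
    cylinder w ⊆ yesSet l (yesCount l w) := by
  intro Y hY
  rw [mem_yesSet_iff]
  exact ⟨w.length, by rw [show pref Y w.length = w from hY]⟩

lemma yesSet_eq_iUnion (l : List Bool → Bool) (n : ℕ) :
    yesSet l n = ⋃ N, {Y | n ≤ yesCount l (pref Y N)} := by
  ext Y; simp [mem_yesSet_iff]

lemma yesCount_pref_mono (l : List Bool → Bool) (Y : ℕ → Bool) :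
    Monotone fun N => yesCount l (pref Y N) := by
  refine monotone_nat_of_le_succ fun N => ?_
  rw [pref_succ, yesCount_append]
  exact Nat.le_add_right _ _

/-! ### The greedy learner of a martingale -/

/-- Yes count of the greedy learner of `D` on the reversal of the argument: the count goes up by
one when `D` reaches the next power of two.  Reversal makes the recursion structural. -/
noncomputable def greedyCountRev (D : List Bool → ℝ) : List Bool → ℕ
  | [] => 0
  | b :: u =>
    open Classical in
    if (2 : ℝ) ^ (greedyCountRev D u + 1) ≤ D (b :: u).reverse then greedyCountRev D u + 1
    else greedyCountRev D u

/-- The number of yeses of the greedy learner of `D` along `w`. -/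
noncomputable def greedyCount (D : List Bool → ℝ) (w : List Bool) : ℕ := greedyCountRev D w.reverse

/-- The greedy learner of `D`: it says yes at the strings where `greedyCount` goes up. -/
noncomputable def greedyLearner (D : List Bool → ℝ) (w : List Bool) : Bool :=
  decide (greedyCount D w ≠ greedyCount D w.dropLast)

lemma greedyCount_append (D : List Bool → ℝ) (w : List Bool) (b : Bool) :
    ((2 : ℝ) ^ (greedyCount D w + 1) ≤ D (w ++ [b]) ∧
        greedyCount D (w ++ [b]) = greedyCount D w + 1) ∨
      (D (w ++ [b]) < (2 : ℝ) ^ (greedyCount D w + 1) ∧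
        greedyCount D (w ++ [b]) = greedyCount D w) := by
  by_cases h : (2 : ℝ) ^ (greedyCount D w + 1) ≤ D (w ++ [b])
  · left
    refine ⟨h, ?_⟩
    simp only [greedyCount] at h
    simp [greedyCount, greedyCountRev, h]
  · right
    refine ⟨not_le.mp h, ?_⟩
    simp only [greedyCount] at h
    simp [greedyCount, greedyCountRev, h]

lemma yesCount_greedyLearner (D : List Bool → ℝ) (w : List Bool) :
    yesCount (greedyLearner D) w = greedyCount D w := by
  induction w using List.reverseRecOn with
  | nil => simp [yesCount, greedyLearner, greedyCount, greedyCountRev]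
  | append_singleton w b ih =>
    rw [yesCount_append, ih]
    rcases greedyCount_append D w b with h | h <;> simp [greedyLearner, h.2]

section Martingale

variable {D : List Bool → ℝ}

/-- The greedy count keeps up with `log₂ D`, since a martingale at most doubles in one step. -/
lemma lt_two_pow_greedyCount (hD0 : ∀ w, 0 ≤ D w)
    (hD : ∀ w, 2 * D w = D (w ++ [false]) + D (w ++ [true])) (hD1 : D [] ≤ 1) (w : List Bool) :
    D w < 2 ^ (greedyCount D w + 1) := by
  induction w using List.reverseRecOn with
  | nil =>
    simp only [greedyCount, List.reverse_nil, greedyCountRev]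
    norm_num
    linarith
  | append_singleton w b ih =>
    rcases greedyCount_append D w b with h | h
    · rw [h.2, pow_succ]
      have h0 := hD0 (w ++ [false])
      have h1 := hD0 (w ++ [true])
      have h2 := hD w
      cases b <;> linarith
    · rw [h.2]; exact h.1

/-- Maximal inequality inside `C_w`: given that the `n`-th yes has not yet occurred along `w`,
it occurs within the next `N` bits with conditional probability at most `D w / 2^n`. -/
lemma greedy_cylinder_measure_le (μ : Measure (ℕ → Bool))
    (hμ : ∀ w : List Bool, μ (cylinder w) = (2 ^ w.length)⁻¹)
    (hD0 : ∀ w, 0 ≤ D w) (hD : ∀ w, 2 * D w = D (w ++ [false]) + D (w ++ [true]))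
    (n N : ℕ) (w : List Bool) (hw : greedyCount D w < n) :
    μ (cylinder w ∩ {Y | n ≤ greedyCount D (pref Y (w.length + N))}) ≤
      ENNReal.ofReal (D w / 2 ^ n / 2 ^ w.length) := by
  induction N generalizing w with
  | zero =>
    have : cylinder w ∩ {Y | n ≤ greedyCount D (pref Y (w.length + 0))} = ∅ := by
      ext Y
      simp only [_root_.cylinder, add_zero, Set.mem_inter_iff, Set.mem_ofPred_eq,
        Set.mem_empty_iff_false, iff_false, not_and, not_le]
      intro h
      rwa [h]
    rw [this]; simp
  | succ N ih =>
    have key : ∀ b, μ (cylinder (w ++ [b]) ∩ {Y | n ≤ greedyCount D (pref Y (w.length + (N + 1)))})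
        ≤ ENNReal.ofReal (D (w ++ [b]) / 2 ^ n / 2 ^ (w.length + 1)) := by
      intro b
      by_cases hb : greedyCount D (w ++ [b]) < n
      · have := ih (w ++ [b]) hb
        rw [List.length_append, List.length_singleton, add_assoc, add_comm 1 N] at this
        exact this
      · -- The `n`-th yes happens at `w ++ [b]`, so `D (w ++ [b]) ≥ 2^n`.
        have hge : (2 : ℝ) ^ n ≤ D (w ++ [b]) := by
          rcases greedyCount_append D w b with h | h
          · have : greedyCount D w + 1 = n := by omega
            rw [← this]; exact h.1
          · omega
        refine (measure_mono Set.inter_subset_left).trans ?_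
        rw [hμ, List.length_append, List.length_singleton]
        have h1 : (2 ^ (w.length + 1) : ENNReal)⁻¹ = ENNReal.ofReal (1 / 2 ^ (w.length + 1)) := by
          rw [one_div, ENNReal.ofReal_inv_of_pos (by positivity), ENNReal.ofReal_pow (by norm_num)]
          simp
        rw [h1]
        apply ENNReal.ofReal_le_ofReal
        gcongr
        rw [le_div_iff₀ (by positivity)]
        simpa using hge
    have hsplit : cylinder w ∩ {Y | n ≤ greedyCount D (pref Y (w.length + (N + 1)))} =
        (cylinder (w ++ [false]) ∩ {Y | n ≤ greedyCount D (pref Y (w.length + (N + 1)))}) ∪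
        (cylinder (w ++ [true]) ∩ {Y | n ≤ greedyCount D (pref Y (w.length + (N + 1)))}) := by
      rw [← Set.union_inter_distrib_right, ← cylinder_split]
    rw [hsplit]
    refine (measure_union_le _ _).trans ((add_le_add (key false) (key true)).trans ?_)
    have h0 := hD0 (w ++ [false])
    have h1 := hD0 (w ++ [true])
    rw [← ENNReal.ofReal_add (by positivity) (by positivity)]
    apply ENNReal.ofReal_le_ofReal
    rw [← add_div, ← add_div, ← hD w, pow_succ]
    apply le_of_eq
    field_simp

lemma greedy_measure_le (μ : Measure (ℕ → Bool))
    (hμ : ∀ w : List Bool, μ (cylinder w) = (2 ^ w.length)⁻¹)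
    (hD0 : ∀ w, 0 ≤ D w) (hD : ∀ w, 2 * D w = D (w ++ [false]) + D (w ++ [true]))
    (hD1 : D [] ≤ 1) : MeasureCondition μ (greedyLearner D) := by
  intro n
  change μ (yesSet (greedyLearner D) n) ≤ _
  have huniv : μ Set.univ = 1 := by rw [← cylinder_nil, hμ]; simp
  rcases Nat.eq_zero_or_pos n with rfl | hn
  · simpa [huniv] using measure_mono (μ := μ) (Set.subset_univ (yesSet (greedyLearner D) 0))
  rw [yesSet_eq_iUnion, Monotone.measure_iUnion]
  · refine iSup_le fun N => ?_
    have h := greedy_cylinder_measure_le μ hμ hD0 hD n N []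
      (by simpa [greedyCount, greedyCountRev] using hn)
    simp only [cylinder_nil, Set.univ_inter, List.length_nil, zero_add, pow_zero, div_one] at h
    simp only [yesCount_greedyLearner]
    refine h.trans ?_
    have h1 : (2 ^ n : ENNReal)⁻¹ = ENNReal.ofReal (1 / 2 ^ n) := by
      rw [one_div, ENNReal.ofReal_inv_of_pos (by positivity), ENNReal.ofReal_pow (by norm_num)]
      simp
    rw [h1]
    apply ENNReal.ofReal_le_ofReal
    gcongr
  · intro a b hab Y hY
    exact le_trans hY (yesCount_pref_mono _ Y hab)

end Martingale

/-! ### From gales to learners -/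

lemma learns_of_gale (μ : Measure (ℕ → Bool))
    (hμ : ∀ w : List Bool, μ (cylinder w) = (2 ^ w.length)⁻¹) {s : ℝ} {d : List Bool → ℝ}
    (hd : IsGale s d) :
    ∃ l : List Bool → Bool, ∀ X, SucceedsStronglyOn d X → StronglySLearns μ l s X := by
  obtain ⟨hd0, hdg⟩ := hd
  have hc : 0 < 1 + d [] := by linarith [hd0 []]
  set D : List Bool → ℝ := fun w => (2 : ℝ) ^ ((1 - s) * w.length) * d w / (1 + d []) with hDdef
  have hD0 : ∀ w, 0 ≤ D w := fun w => by
    have := hd0 w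
    simp only [hDdef]; positivity
  have hD : ∀ w, 2 * D w = D (w ++ [false]) + D (w ++ [true]) := fun w => by
    simp only [hDdef, List.length_append, List.length_singleton]
    rw [← add_div, ← mul_add, ← hdg w]
    have : (2 : ℝ) ^ ((1 - s) * ((w.length + 1 : ℕ) : ℝ)) * (2 : ℝ) ^ s
        = 2 * (2 : ℝ) ^ ((1 - s) * w.length) := by
      rw [← Real.rpow_add (by norm_num)]
      have : (1 - s) * ((w.length + 1 : ℕ) : ℝ) + s = 1 + (1 - s) * w.length := by
        push_cast; ring
      rw [this, Real.rpow_add (by norm_num), Real.rpow_one]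
    rw [← mul_assoc, this]; ring
  have hD1 : D [] ≤ 1 := by
    simp only [hDdef, List.length_nil]
    rw [div_le_one hc]
    simp
  refine ⟨greedyLearner D, fun X hX => ⟨greedy_measure_le μ hμ hD0 hD hD1, ?_⟩⟩
  refine le_of_forall_lt_imp_le_of_dense fun a ha => ?_
  refine le_liminf_of_le
    (isBoundedUnder_of ⟨2, fun n => pathAvg_le_two _ _⟩).isCoboundedUnder_ge ?_
  have hbig : ∀ᶠ n : ℕ in atTop, 1 ≤ (1 - s - a) * (n : ℝ) :=
    (Tendsto.const_mul_atTop (by linarith) tendsto_natCast_atTop_atTop).eventually_ge_atTop 1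
  filter_upwards [hX.eventually_ge_atTop (1 + d []), hbig, eventually_gt_atTop 0]
    with n hn1 hn2 hn3
  have hlt := lt_two_pow_greedyCount hD0 hD hD1 (pref X n)
  have hge : (2 : ℝ) ^ ((1 - s) * n) ≤ D (pref X n) := by
    simp only [hDdef, pref_length]
    rw [le_div_iff₀ hc]
    gcongr
  have hcount := hge.trans_lt hlt
  rw [← Real.rpow_natCast, Real.rpow_lt_rpow_left_iff (by norm_num)] at hcount
  push_cast at hcount
  rw [pathAvg_eq, yesCount_greedyLearner, pref_length, le_div_iff₀ (by exact_mod_cast hn3)]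
  linarith

/-! ### From learners to gales -/

lemma gale_of_finite_measure (ν : Measure (ℕ → Bool)) [IsFiniteMeasure ν] (t : ℝ) :
    IsGale t fun w => (2 : ℝ) ^ (t * w.length) * ν.real (cylinder w) := by
  refine ⟨fun w => by positivity, fun w => ?_⟩
  simp only [List.length_append, List.length_singleton]
  rw [← mul_add, ← measureReal_union (cylinder_disjoint w) (measurableSet_cylinder_bool _),
    ← cylinder_split, ← mul_assoc, ← Real.rpow_add (by norm_num)]
  congr 2
  push_cast; ring

lemma gale_of_learns (μ : Measure (ℕ → Bool))
    (hμ : ∀ w : List Bool, μ (cylinder w) = (2 ^ w.length)⁻¹) {s t : ℝ} (hs : 0 ≤ s) (hst : s < t)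
    {l : List Bool → Bool} (hl : MeasureCondition μ l) :
    ∃ d, IsGale t d ∧ ∀ X, StronglySLearns μ l s X → SucceedsStronglyOn d X := by
  obtain ⟨ε, hε0, hε1, hεt⟩ : ∃ ε : ℝ, 0 < ε ∧ ε ≤ 1 ∧ 4 * ε ≤ t - s :=
    ⟨min 1 ((t - s) / 4), lt_min one_pos (by linarith), min_le_left _ _, by
      linarith [min_le_right 1 ((t - s) / 4)]⟩
  set c : ℕ → ENNReal := fun n => ENNReal.ofReal ((2 : ℝ) ^ ((1 - ε) * n)) with hc
  set ν : Measure (ℕ → Bool) := Measure.sum fun n => c n • μ.restrict (yesSet l n) with hν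
  have hfin : IsFiniteMeasure ν := by
    constructor
    rw [hν, Measure.sum_apply _ MeasurableSet.univ]
    have hr0 : 0 ≤ (2 : ℝ) ^ (-ε) := by positivity
    have hr1 : (2 : ℝ) ^ (-ε) < 1 := Real.rpow_lt_one_of_one_lt_of_neg (by norm_num) (by linarith)
    have hterm : ∀ n, (c n • μ.restrict (yesSet l n)) Set.univ
        ≤ ENNReal.ofReal (((2 : ℝ) ^ (-ε)) ^ n) := by
      intro n
      simp only [Measure.smul_apply, smul_eq_mul, Measure.restrict_apply_univ]
      refine (mul_le_mul_right (hl n) (c n)).trans (le_of_eq ?_)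
      have h1 : (2 ^ n : ENNReal)⁻¹ = ENNReal.ofReal ((2 : ℝ) ^ (-(n : ℝ))) := by
        rw [Real.rpow_neg (by norm_num), ENNReal.ofReal_inv_of_pos (by positivity),
          Real.rpow_natCast, ENNReal.ofReal_pow (by norm_num)]
        simp
      rw [h1, hc, ← ENNReal.ofReal_mul (by positivity), ← Real.rpow_add (by norm_num),
        ← Real.rpow_natCast, ← Real.rpow_mul (by norm_num)]
      congr 2; ring
    refine (ENNReal.tsum_le_tsum hterm).trans_lt ?_
    rw [← ENNReal.ofReal_tsum_of_nonneg (fun n => by positivity)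
      (summable_geometric_of_lt_one hr0 hr1)]
    exact ENNReal.ofReal_lt_top
  refine ⟨_, gale_of_finite_measure ν t, fun X hX => ?_⟩
  have hlow : ∀ w, (2 : ℝ) ^ ((1 - ε) * yesCount l w) * (2 : ℝ) ^ (-(w.length : ℝ))
      ≤ ν.real (cylinder w) := by
    intro w
    have h : c (yesCount l w) * μ (cylinder w) ≤ ν (cylinder w) := by
      rw [hν, Measure.sum_apply _ (measurableSet_cylinder_bool w)]
      refine le_trans (le_of_eq ?_) (ENNReal.le_tsum (yesCount l w))
      rw [Measure.smul_apply, smul_eq_mul, Measure.restrict_apply (measurableSet_cylinder_bool w),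
        Set.inter_eq_left.mpr (cylinder_subset_yesSet l w)]
    have h2 := ENNReal.toReal_mono (measure_ne_top ν _) h
    rw [ENNReal.toReal_mul, hμ, hc, ENNReal.toReal_ofReal (by positivity)] at h2
    rw [Real.rpow_neg (by norm_num), Real.rpow_natCast]
    simpa [Measure.real] using h2
  have hev : ∀ᶠ n in atTop, 1 - s - ε < pathAvg l (pref X n) :=
    eventually_lt_of_lt_liminf (lt_of_lt_of_le (by linarith) hX.2)
      (isBoundedUnder_of ⟨0, fun n => pathAvg_nonneg _ _⟩)
  have hgrow : Tendsto (fun n : ℕ => ((2 : ℝ) ^ ε) ^ n) atTop atTop :=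
    tendsto_pow_atTop_atTop_of_one_lt (Real.one_lt_rpow (by norm_num) hε0)
  refine tendsto_atTop_mono' _ ?_ hgrow
  filter_upwards [hev, eventually_gt_atTop 0] with n hn hn0
  have hn0' : (0 : ℝ) < n := by exact_mod_cast hn0
  rw [pathAvg_eq, pref_length, lt_div_iff₀ hn0'] at hn
  have h := hlow (pref X n)
  rw [pref_length] at h
  rw [pref_length]
  refine le_trans ?_ (mul_le_mul_of_nonneg_left h (by positivity))
  rw [← Real.rpow_add (by norm_num), ← Real.rpow_add (by norm_num), ← Real.rpow_natCast,
    ← Real.rpow_mul (by norm_num)]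
  apply Real.rpow_le_rpow_of_exponent_le (by norm_num)
  have h1 : (1 - ε) * ((1 - s - ε) * n) ≤ (1 - ε) * yesCount l (pref X n) :=
    mul_le_mul_of_nonneg_left hn.le (by linarith)
  -- The exponent per bit: `t - 1 + (1-ε)(1-s-ε) = t - s - 2ε + ε(s+ε) ≥ ε`.
  have h2 : 0 ≤ (t - 1 + (1 - ε) * (1 - s - ε) - ε) * n := by
    apply mul_nonneg _ hn0'.le
    nlinarith [mul_nonneg hε0.le hs]
  nlinarith

/-- The packing dimension of `Γ` equals the infimum of all `s ∈ [0,∞)`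
such that some learning function strongly `s`-learns every `X ∈ Γ`. -/
theorem dimP_eq_inf_strongly_s_learnable
    (μ : Measure (ℕ → Bool)) (hμ : ∀ w : List Bool, μ (cylinder w) = (2 ^ w.length)⁻¹)
    (Γ : Set (ℕ → Bool)) :
    dimP Γ = sInf {s : ℝ | 0 ≤ s ∧ ∃ l : List Bool → Bool,
      ∀ X ∈ Γ, StronglySLearns μ l s X} := by
  rcases Γ.eq_empty_or_nonempty with rfl | ⟨X₀, hX₀⟩
  · have hg : ∀ s : ℝ, ∃ d, IsGale s d := fun s => ⟨fun _ => 0, by simp [IsGale]⟩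
    simp [dimP, hg]
  unfold dimP
  set A := {s : ℝ | 0 ≤ s ∧ ∃ d, IsGale s d ∧ ∀ X ∈ Γ, SucceedsStronglyOn d X} with hA
  set B := {s : ℝ | 0 ≤ s ∧ ∃ l : List Bool → Bool, ∀ X ∈ Γ, StronglySLearns μ l s X} with hB
  have hAB : A ⊆ B := by
    rintro s ⟨hs, d, hd, hX⟩
    obtain ⟨l, hl⟩ := learns_of_gale μ hμ hd
    exact ⟨hs, l, fun X h => hl X (hX X h)⟩
  have hBA : ∀ s ∈ B, ∀ t, s < t → t ∈ A := by
    rintro s ⟨hs, l, hl⟩ t hst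
    obtain ⟨d, hd, hX⟩ := gale_of_learns μ hμ hs hst (hl X₀ hX₀).1
    exact ⟨hs.trans hst.le, d, hd, fun X h => hX X (hl X h)⟩
  -- The learner that never says yes `1`-learns everything, so neither infimum is a junk value.
  have h1B : (1 : ℝ) ∈ B := by
    refine ⟨zero_le_one, fun _ => false, fun X _ => ⟨fun n => ?_, ?_⟩⟩
    · rcases Nat.eq_zero_or_pos n with rfl | hn
      · have huniv : μ Set.univ = 1 := by rw [← cylinder_nil, hμ]; simp
        simp [huniv]
      · have : n ≠ 0 := hn.ne'
        simp [this]
    · simp [pathAvg]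
  have hAne : A.Nonempty := ⟨2, hBA 1 h1B 2 (by norm_num)⟩
  have hAbdd : BddBelow A := ⟨0, fun s hs => hs.1⟩
  have hBbdd : BddBelow B := ⟨0, fun s hs => hs.1⟩
  apply le_antisymm
  · refine le_csInf ⟨1, h1B⟩ fun s hs => ?_
    exact le_of_forall_gt_imp_ge_of_dense fun t ht => csInf_le hAbdd (hBA s hs t ht)
  · exact csInf_le_csInf hBbdd hAne hAB
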